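/- Let r > 0, let C ⊂ SO(3) be a finite set with d(p,q) ≥ r for all distinct p,q ∈ C, let x_j ∈ C, and let x ∈ SO(3). Then the number of points x_i ∈ C \ {x_j} with d(x,x_i) ≤ r is at most 27. -/

import Mathlib

noncomputable section

abbrev Mat3 := Matrix (Fin 3) (Fin 3) ℝ

/-- membership in SO(3) -/
def IsSO3 (x : Mat3) : Prop := x.transpose * x = 1 ∧ x.det = 1

/-- rotation angle -/
def rotAngle (x : Mat3) : ℝ := Real.arccos ((Matrix.trace x - 1) / 2)

/-- the bi-invariant metric d(x,y) = ω(y⁻¹x) -/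
def so3Dist (x y : Mat3) : ℝ := rotAngle (y⁻¹ * x)

end

/-!
The unit quaternions cover `SO(3)` two to one, and if `p`, `q` are unit quaternions over `x`, `y`,
then `cos (d(x, y)) = 2⟪p, q⟫² - 1`. Lift the given point to `u`, and lift the points of `C` within
distance `r` of it to the hemisphere around `u`. Two of these lifts are at least as far from each
other as each of them is from `u`, so they are seen from `u` under an angle of at least `π / 3`.
Their directions at `u` therefore form a spherical code in dimension three with inner products at
most `1 / 2`, and the linear programming bound with a cubic polynomial shows that such a code has
at most 24 points. The centre itself may contribute one more point of `C`.
-/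

open Module
open scoped Quaternion InnerProductSpace

section SphericalCode

variable {ι κ E : Type*} [NormedAddCommGroup E] [InnerProductSpace ℝ E]

/-- Delsarte's linear programming bound, obtained by summing all entries of `K`. -/
lemma card_mul_le_of_posSemidef_sub_const [Fintype ι] [Nonempty ι] {K : Matrix ι ι ℝ} {a b : ℝ}
    (hK : (K - Matrix.of fun _ _ ↦ a).PosSemidef) (hdiag : ∀ i, K i i ≤ b)
    (hoff : Pairwise fun i j ↦ K i j ≤ 0) : a * Fintype.card ι ≤ b := by
  classical
  have sum_nonneg : 0 ≤ ∑ i, ∑ j, (K i j - a) := by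
    simpa [dotProduct, Matrix.mulVec] using hK.dotProduct_mulVec_nonneg 1
  have entry_le (i j : ι) : K i j ≤ if i = j then b else 0 := by
    split_ifs with hij
    · exact hij ▸ hdiag i
    · exact hoff hij
  have sum_le : ∑ i, ∑ j, (K i j - a) ≤ Fintype.card ι * (b - a * Fintype.card ι) := calc
    _ ≤ ∑ i : ι, ∑ j : ι, ((if i = j then b else 0) - a) := by gcongr; exact entry_le _ _
    _ = Fintype.card ι * (b - a * Fintype.card ι) := by
      simp [Finset.sum_sub_distrib, mul_sub, mul_comm]
  have hcard : (0 : ℝ) < Fintype.card ι := by exact_mod_cast Fintype.card_pos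
  exact sub_nonneg.1 (nonneg_of_mul_nonneg_right (sum_nonneg.trans sum_le) hcard)

/-- The traceless part `x ⊗ x - (‖x‖² / dim E) • id` of the tensor square of `x`, as its tuple of
coordinates in an orthonormal basis. Its inner products are, up to scaling, the second zonal
spherical polynomial of the inner products of the vectors. -/
noncomputable def tracelessSquare [Fintype κ] [DecidableEq κ] (b : OrthonormalBasis κ ℝ E) (x : E) :
    EuclideanSpace ℝ (κ × κ) :=
  WithLp.toLp 2 fun k ↦
    ⟪x, b k.1⟫_ℝ * ⟪x, b k.2⟫_ℝ - if k.1 = k.2 then ‖x‖ ^ 2 / Fintype.card κ else 0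

lemma inner_tracelessSquare [Fintype κ] [DecidableEq κ] (b : OrthonormalBasis κ ℝ E) (x y : E) :
    ⟪tracelessSquare b x, tracelessSquare b y⟫_ℝ =
      ⟪x, y⟫_ℝ ^ 2 - ‖x‖ ^ 2 * ‖y‖ ^ 2 / Fintype.card κ := by
  have parseval (x y : E) : ∑ k, ⟪x, b k⟫_ℝ * ⟪y, b k⟫_ℝ = ⟪x, y⟫_ℝ := by
    simpa only [real_inner_comm] using b.sum_inner_mul_inner x y
  have parseval_sq (x : E) : ∑ k, ⟪x, b k⟫_ℝ ^ 2 = ‖x‖ ^ 2 := by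
    simpa only [sq, real_inner_self_eq_norm_mul_norm] using parseval x x
  let n : ℝ := Fintype.card κ
  let tx := ‖x‖ ^ 2 / n
  let ty := ‖y‖ ^ 2 / n
  calc
    _ = ∑ k, ∑ l, (⟪x, b k⟫_ℝ * ⟪y, b k⟫_ℝ * (⟪x, b l⟫_ℝ * ⟪y, b l⟫_ℝ) -
          if k = l then ty * ⟪x, b k⟫_ℝ ^ 2 + tx * ⟪y, b k⟫_ℝ ^ 2 - tx * ty else 0) := by
      simp only [tracelessSquare, PiLp.inner_apply, Fintype.sum_prod_type, RCLike.inner_apply,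
        conj_trivial]
      refine Finset.sum_congr rfl fun k _ ↦ Finset.sum_congr rfl fun l _ ↦ ?_
      split_ifs with hkl
      · subst hkl
        ring
      · ring
    _ = ⟪x, y⟫_ℝ ^ 2 - (ty * ‖x‖ ^ 2 + tx * ‖y‖ ^ 2 - n * (tx * ty)) := by
      simp only [Finset.sum_sub_distrib, Finset.sum_add_distrib, Finset.sum_ite_eq,
        Finset.mem_univ, if_true, ← Finset.mul_sum, ← Finset.sum_mul, parseval, parseval_sq,
        Finset.sum_const, nsmul_eq_mul, Finset.card_univ, n]
      ring
    _ = ⟪x, y⟫_ℝ ^ 2 - ‖x‖ ^ 2 * ‖y‖ ^ 2 / n := by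
      rcases eq_or_ne n 0 with hn | hn
      · simp [tx, ty, hn]
      · simp only [tx, ty]
        field_simp
        ring

lemma posSemidef_sq_inner_sub [Finite ι] [FiniteDimensional ℝ E] (v : ι → E) :
    (Matrix.of fun i j ↦
      ⟪v i, v j⟫_ℝ ^ 2 - ‖v i‖ ^ 2 * ‖v j‖ ^ 2 / finrank ℝ E).PosSemidef := by
  have eq_gram : (Matrix.of fun i j ↦ ⟪v i, v j⟫_ℝ ^ 2 - ‖v i‖ ^ 2 * ‖v j‖ ^ 2 / finrank ℝ E) =
      Matrix.gram ℝ (tracelessSquare (stdOrthonormalBasis ℝ E) ∘ v) := by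
    ext i j
    simp [inner_tracelessSquare]
  exact eq_gram ▸ Matrix.posSemidef_gram ℝ _

/-- The test polynomial is `(t - s) * (t + β) ^ 2`, which is nonpositive for `t ≤ s`. -/
lemma card_mul_le_of_inner_le [Fintype ι] [Nonempty ι] [FiniteDimensional ℝ E] {v : ι → E}
    {s β : ℝ} (hv : ∀ i, ‖v i‖ = 1) (hs : Pairwise fun i j ↦ ⟪v i, v j⟫_ℝ ≤ s) (hsβ : s ≤ 2 * β)
    (hβ : 0 ≤ β ^ 2 - 2 * s * β + 1 / finrank ℝ E) :
    ((2 * β - s) / finrank ℝ E - s * β ^ 2) * Fintype.card ι ≤ (1 - s) * (1 + β) ^ 2 := by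
  let K : Matrix ι ι ℝ := Matrix.of fun i j ↦ (⟪v i, v j⟫_ℝ - s) * (⟪v i, v j⟫_ℝ + β) ^ 2
  refine card_mul_le_of_posSemidef_sub_const (K := K) ?_ (fun i ↦ ?_) fun i j hij ↦ ?_
  · have gram_psd := Matrix.posSemidef_gram ℝ v
    have sq_psd := posSemidef_sq_inner_sub v
    have cube_psd := gram_psd.hadamard sq_psd
    refine (congrArg Matrix.PosSemidef ?_).mpr
      ((cube_psd.add (sq_psd.smul (sub_nonneg.2 hsβ))).add (gram_psd.smul hβ))
    ext i j
    simp only [K, hv, one_pow, mul_one, Matrix.sub_apply, Matrix.add_apply, Matrix.smul_apply,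
      Matrix.of_apply, Matrix.hadamard_apply, Matrix.gram_apply, smul_eq_mul]
    ring
  · simp [K, hv]
  · exact mul_nonpos_of_nonpos_of_nonneg (sub_nonpos.2 (hs hij)) (sq_nonneg _)

lemma card_le_of_inner_le_half [Fintype ι] {v : ι → E} (hE : finrank ℝ E = 3)
    (hv : ∀ i, ‖v i‖ = 1) (hs : Pairwise fun i j ↦ ⟪v i, v j⟫_ℝ ≤ 1 / 2) :
    Fintype.card ι ≤ 24 := by
  have : FiniteDimensional ℝ E := .of_finrank_pos (by lia)
  cases isEmpty_or_nonempty ι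
  · simp
  -- `β = 3 / 5` minimises the bound for `s = 1 / 2` in dimension three.
  have := card_mul_le_of_inner_le (β := 3 / 5) hv hs (by norm_num) (by norm_num [hE])
  norm_num [hE] at this
  exact_mod_cast (by linarith : (Fintype.card ι : ℝ) ≤ 24)

end SphericalCode

section SphericalTriangle

lemma sub_mul_le_half_mul_sqrt_mul_sqrt {a b m : ℝ} (ha : a ≤ 1) (hb : b ≤ 1) (hma : m ≤ a)
    (hmb : m ≤ b) : m - a * b ≤ 1 / 2 * (√(1 - a ^ 2) * √(1 - b ^ 2)) := by
  wlog hab : a ≤ b generalizing a b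
  · simpa only [mul_comm] using this hb ha hmb hma (le_of_not_ge hab)
  suffices a * (1 - b) ≤ 1 / 2 * (√(1 - a ^ 2) * √(1 - b ^ 2)) by linarith
  rcases le_or_gt a 0 with ha₀ | ha₀
  · exact (mul_nonpos_of_nonpos_of_nonneg ha₀ (by linarith)).trans (by positivity)
  have hb₀ : 0 < b := ha₀.trans_le hab
  have hab₂ : a ^ 2 ≤ b ^ 2 := by gcongr
  have hb₂ : b ^ 2 ≤ 1 := pow_le_one₀ hb₀.le hb
  have cubic_nonneg : 0 ≤ (1 - b) ^ 2 * (1 + 3 * b) := by positivity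
  have key : 4 * a ^ 2 * (1 - b) ≤ (1 - a ^ 2) * (1 + b) := by
    nlinarith [mul_nonneg (sub_nonneg.2 hab₂) (by linarith : 0 ≤ 5 - 3 * b)]
  refine le_of_abs_le (abs_le_of_sq_le_sq ?_ (by positivity))
  rw [mul_pow, mul_pow, mul_pow, Real.sq_sqrt (by linarith), Real.sq_sqrt (by linarith)]
  nlinarith [mul_le_mul_of_nonneg_right key (sub_nonneg.2 hb)]

variable {ι E : Type*} [NormedAddCommGroup E] [InnerProductSpace ℝ E] {u p q : E}

/-- The component of `p` orthogonal to `u`. For unit vectors it points along the great circle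
from `u` to `p`, so that angles between tangent directions are the spherical angles at `u`. -/
noncomputable def tangentDirection (u p : E) : (ℝ ∙ u)ᗮ :=
  (ℝ ∙ u)ᗮ.orthogonalProjectionOnto p

lemma inner_tangentDirection (hu : ‖u‖ = 1) (p q : E) :
    ⟪tangentDirection u p, tangentDirection u q⟫_ℝ = ⟪p, q⟫_ℝ - ⟪p, u⟫_ℝ * ⟪q, u⟫_ℝ := by
  have coe_tangentDirection (p : E) : (tangentDirection u p : E) = p - ⟪p, u⟫_ℝ • u := by
    rw [tangentDirection, Submodule.coe_orthogonalProjectionOnto_apply,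
      Submodule.starProjection_orthogonal_val, Submodule.starProjection_unit_singleton ℝ hu,
      real_inner_comm]
  rw [Submodule.coe_inner, coe_tangentDirection, coe_tangentDirection]
  simp only [inner_sub_left, inner_sub_right, real_inner_smul_left, real_inner_smul_right,
    real_inner_self_eq_norm_sq, hu, real_inner_comm q u]
  ring

lemma norm_tangentDirection (hu : ‖u‖ = 1) (hp : ‖p‖ = 1) :
    ‖tangentDirection u p‖ = √(1 - ⟪p, u⟫_ℝ ^ 2) := by
  rw [norm_eq_sqrt_real_inner, inner_tangentDirection hu, real_inner_self_eq_norm_sq, hp,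
    one_pow, sq]

/-- In a spherical triangle the angle opposite to a longest side is at least `π / 3`. -/
lemma inner_tangentDirection_le_half_of_inner_le (hu : ‖u‖ = 1) (hp : ‖p‖ = 1) (hq : ‖q‖ = 1)
    (hpu : ⟪p, q⟫_ℝ ≤ ⟪p, u⟫_ℝ) (hqu : ⟪p, q⟫_ℝ ≤ ⟪q, u⟫_ℝ) :
    ⟪tangentDirection u p, tangentDirection u q⟫_ℝ ≤
      1 / 2 * (‖tangentDirection u p‖ * ‖tangentDirection u q‖) := by
  have inner_le_one {p : E} (hp : ‖p‖ = 1) : ⟪p, u⟫_ℝ ≤ 1 := by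
    simpa [hp, hu] using real_inner_le_norm p u
  rw [inner_tangentDirection hu, norm_tangentDirection hu hp, norm_tangentDirection hu hq]
  exact sub_mul_le_half_mul_sqrt_mul_sqrt (inner_le_one hp) (inner_le_one hq) hpu hqu

lemma tangentDirection_ne_zero (hu : ‖u‖ = 1) (hp : ‖p‖ = 1) (hpu : 0 ≤ ⟪p, u⟫_ℝ)
    (hne : p ≠ u) : tangentDirection u p ≠ 0 := by
  have inner_lt_one : ⟪p, u⟫_ℝ < 1 := (inner_lt_one_iff_real_of_norm_eq_one hp hu).2 hne
  rw [← norm_pos_iff, norm_tangentDirection hu hp, Real.sqrt_pos, sub_pos]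
  exact pow_lt_one₀ hpu inner_lt_one two_ne_zero

lemma card_le_of_inner_le_inner [Fintype ι] (hE : finrank ℝ E = 4) {v : ι → E} (hu : ‖u‖ = 1)
    (hv : ∀ i, ‖v i‖ = 1) (hvu : ∀ i, 0 ≤ ⟪v i, u⟫_ℝ) (hne : ∀ i, v i ≠ u)
    (hsep : Pairwise fun i j ↦ ⟪v i, v j⟫_ℝ ≤ ⟪v i, u⟫_ℝ) : Fintype.card ι ≤ 24 := by
  have : FiniteDimensional ℝ E := .of_finrank_pos (by lia)
  have : Fact (finrank ℝ E = 3 + 1) := ⟨hE⟩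
  let w (i : ι) : (ℝ ∙ u)ᗮ := tangentDirection u (v i)
  have hw (i : ι) : w i ≠ 0 := tangentDirection_ne_zero hu (hv i) (hvu i) (hne i)
  have hu₀ : u ≠ 0 := norm_ne_zero_iff.1 (by simp [hu])
  refine card_le_of_inner_le_half (v := fun i ↦ ‖w i‖⁻¹ • w i)
    (Submodule.finrank_orthogonal_span_singleton hu₀) (fun i ↦ norm_smul_inv_norm (hw i))
    fun i j hij ↦ ?_
  have hji : ⟪v i, v j⟫_ℝ ≤ ⟪v j, u⟫_ℝ := real_inner_comm (v i) (v j) ▸ hsep hij.symm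
  have angle_ge := inner_tangentDirection_le_half_of_inner_le hu (hv i) (hv j) (hsep hij) hji
  have := norm_pos_iff.2 (hw i)
  have := norm_pos_iff.2 (hw j)
  calc _ = ⟪w i, w j⟫_ℝ / (‖w i‖ * ‖w j‖) := by
        rw [real_inner_smul_left, real_inner_smul_right]; field_simp
    _ ≤ 1 / 2 := (div_le_iff₀ (by positivity)).2 angle_ge

end SphericalTriangle

section UnitQuaternion

/-- The matrix of the linear map `v ↦ q * v * star q` on imaginary quaternions. For `q` of
norm one it is a rotation, and `q ↦ rotationMatrix q` is then the double cover of `SO(3)`. -/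
def rotationMatrix (q : ℍ[ℝ]) : Mat3 :=
  !![q.re ^ 2 + q.imI ^ 2 - q.imJ ^ 2 - q.imK ^ 2,
      2 * (q.imI * q.imJ - q.re * q.imK), 2 * (q.imI * q.imK + q.re * q.imJ);
    2 * (q.imI * q.imJ + q.re * q.imK),
      q.re ^ 2 - q.imI ^ 2 + q.imJ ^ 2 - q.imK ^ 2, 2 * (q.imJ * q.imK - q.re * q.imI);
    2 * (q.imI * q.imK - q.re * q.imJ),
      2 * (q.imJ * q.imK + q.re * q.imI), q.re ^ 2 - q.imI ^ 2 - q.imJ ^ 2 + q.imK ^ 2]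

lemma rotationMatrix_neg (q : ℍ[ℝ]) : rotationMatrix (-q) = rotationMatrix q := by
  simp [rotationMatrix]

lemma quaternion_norm_sq (q : ℍ[ℝ]) :
    ‖q‖ ^ 2 = q.re ^ 2 + q.imI ^ 2 + q.imJ ^ 2 + q.imK ^ 2 := by
  rw [sq, ← Quaternion.normSq_eq_norm_mul_self, Quaternion.normSq_def']

lemma quaternion_inner (p q : ℍ[ℝ]) :
    ⟪p, q⟫_ℝ = p.re * q.re + p.imI * q.imI + p.imJ * q.imJ + p.imK * q.imK := by
  simp [Quaternion.inner_def]

lemma transpose_rotationMatrix_mul_self (q : ℍ[ℝ]) :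
    (rotationMatrix q).transpose * rotationMatrix q = (‖q‖ ^ 2) ^ 2 • (1 : Mat3) := by
  rw [quaternion_norm_sq]
  ext i j
  fin_cases i <;> fin_cases j <;>
    simp [rotationMatrix, Matrix.mul_apply, Fin.sum_univ_three] <;> ring

lemma trace_transpose_rotationMatrix_mul (p q : ℍ[ℝ]) :
    ((rotationMatrix q).transpose * rotationMatrix p).trace =
      4 * ⟪p, q⟫_ℝ ^ 2 - ‖p‖ ^ 2 * ‖q‖ ^ 2 := by
  rw [quaternion_norm_sq, quaternion_norm_sq, quaternion_inner]
  simp only [rotationMatrix, Matrix.trace_fin_three, Matrix.mul_apply, Fin.sum_univ_three,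
    Matrix.transpose_apply, Matrix.of_apply, Matrix.cons_val]
  ring

lemma so3Dist_rotationMatrix {p q : ℍ[ℝ]} (hp : ‖p‖ = 1) (hq : ‖q‖ = 1) :
    so3Dist (rotationMatrix p) (rotationMatrix q) = Real.arccos (2 * ⟪p, q⟫_ℝ ^ 2 - 1) := by
  have inv_eq : (rotationMatrix q)⁻¹ = (rotationMatrix q).transpose :=
    Matrix.inv_eq_left_inv (by simp [transpose_rotationMatrix_mul_self, hq])
  rw [so3Dist, rotAngle, inv_eq, trace_transpose_rotationMatrix_mul, hp, hq]
  ring_nf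

lemma so3Dist_rotationMatrix_le_iff {p q u v : ℍ[ℝ]} (hp : ‖p‖ = 1) (hq : ‖q‖ = 1)
    (hu : ‖u‖ = 1) (hv : ‖v‖ = 1) :
    so3Dist (rotationMatrix p) (rotationMatrix q) ≤ so3Dist (rotationMatrix u) (rotationMatrix v) ↔
      |⟪u, v⟫_ℝ| ≤ |⟪p, q⟫_ℝ| := by
  have mem_Icc {p q : ℍ[ℝ]} (hp : ‖p‖ = 1) (hq : ‖q‖ = 1) :
      2 * ⟪p, q⟫_ℝ ^ 2 - 1 ∈ Set.Icc (-1) 1 := by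
    have : ⟪p, q⟫_ℝ ^ 2 ≤ 1 := by
      simpa [sq_le_one_iff_abs_le_one, hp, hq] using abs_real_inner_le_norm p q
    constructor <;> nlinarith [sq_nonneg ⟪p, q⟫_ℝ]
  rw [so3Dist_rotationMatrix hp hq, so3Dist_rotationMatrix hu hv,
    Real.strictAntiOn_arccos.le_iff_ge (mem_Icc hp hq) (mem_Icc hu hv), ← sq_le_sq]
  constructor <;> intro h <;> linarith

lemma exists_eq_vecMulVec_self {n : Type*} [Fintype n] {K : Matrix n n ℝ} (htrace : 0 < K.trace)
    (hK : ∀ i j k, K i j * K i k = K i i * K j k) : ∃ q, K = Matrix.vecMulVec q q := by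
  obtain ⟨i, -, hi⟩ : ∃ i ∈ Finset.univ, 0 < K i i :=
    Finset.exists_lt_of_sum_lt (by simpa [Matrix.trace] using htrace)
  refine ⟨fun j ↦ K i j / √(K i i), Matrix.ext fun j k ↦ ?_⟩
  rw [Matrix.vecMulVec_apply, div_mul_div_comm, Real.mul_self_sqrt hi.le, hK]
  field_simp

/-- The matrix, linear in `x`, which for the rotation matrix `x` of a unit quaternion with
coordinate vector `q : Fin 4 → ℝ` equals `q qᵀ`. It recovers `q` up to sign. -/
noncomputable def quaternionOuterSquare (x : Mat3) : Matrix (Fin 4) (Fin 4) ℝ :=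
  (1 / 4 : ℝ) •
    !![1 + x 0 0 + x 1 1 + x 2 2, x 2 1 - x 1 2, x 0 2 - x 2 0, x 1 0 - x 0 1;
      x 2 1 - x 1 2, 1 + x 0 0 - x 1 1 - x 2 2, x 0 1 + x 1 0, x 0 2 + x 2 0;
      x 0 2 - x 2 0, x 0 1 + x 1 0, 1 - x 0 0 + x 1 1 - x 2 2, x 1 2 + x 2 1;
      x 1 0 - x 0 1, x 0 2 + x 2 0, x 1 2 + x 2 1, 1 - x 0 0 - x 1 1 + x 2 2]

lemma trace_quaternionOuterSquare (x : Mat3) : (quaternionOuterSquare x).trace = 1 := by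
  simp only [quaternionOuterSquare, Matrix.trace, Fin.sum_univ_four, Matrix.diag_apply,
    Matrix.smul_apply, Matrix.of_apply, Matrix.cons_val, smul_eq_mul]
  ring

lemma IsSO3.adjugate_eq_transpose {x : Mat3} (hx : IsSO3 x) : x.adjugate = x.transpose := by
  have inv_eq : x⁻¹ = x.transpose := Matrix.inv_eq_left_inv hx.1
  rw [← inv_eq, Matrix.inv_def, hx.2, Ring.inverse_one, one_smul]

lemma IsSO3.quaternionOuterSquare_mul {x : Mat3} (hx : IsSO3 x) (i j k : Fin 4) :
    quaternionOuterSquare x i j * quaternionOuterSquare x i k =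
      quaternionOuterSquare x i i * quaternionOuterSquare x j k := by
  have cofactors := Matrix.ext_iff.2 hx.adjugate_eq_transpose
  have columns := Matrix.ext_iff.2 hx.1
  have rows : ∀ i j, (x * x.transpose) i j = (1 : Mat3) i j :=
    Matrix.ext_iff.2 (mul_eq_one_comm.1 hx.1)
  simp only [Fin.forall_fin_succ, IsEmpty.forall_iff, and_true, Fin.succ_zero_eq_one,
    Fin.succ_one_eq_two, Matrix.adjugate_fin_three, Matrix.transpose_apply, Matrix.mul_apply,
    Matrix.of_apply, Matrix.cons_val, Matrix.one_apply, Fin.reduceEq, if_true, if_false,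
    Fin.sum_univ_three] at cofactors columns rows
  -- Each of these minors is a combination of the orthogonality and cofactor relations.
  fin_cases i <;> fin_cases j <;> fin_cases k <;> simp [quaternionOuterSquare] <;> grind

lemma IsSO3.exists_rotationMatrix_eq {x : Mat3} (hx : IsSO3 x) :
    ∃ q : ℍ[ℝ], ‖q‖ = 1 ∧ rotationMatrix q = x := by
  obtain ⟨q, hq⟩ := exists_eq_vecMulVec_self
    (by simp [trace_quaternionOuterSquare x]) hx.quaternionOuterSquare_mul
  have entry (i j : Fin 4) : q i * q j = quaternionOuterSquare x i j := by
    rw [hq, Matrix.vecMulVec_apply]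
  refine ⟨⟨q 0, q 1, q 2, q 3⟩, ?_, ?_⟩
  · have norm_sq : q 0 ^ 2 + q 1 ^ 2 + q 2 ^ 2 + q 3 ^ 2 = 1 := by
      have := trace_quaternionOuterSquare x
      rw [hq, Matrix.trace_vecMulVec] at this
      simpa [dotProduct, Fin.sum_univ_four, sq] using this
    exact (pow_eq_one_iff_of_nonneg (norm_nonneg _) two_ne_zero).1
      ((quaternion_norm_sq _).trans norm_sq)
  · ext i j
    fin_cases i <;> fin_cases j <;> simp [rotationMatrix, sq, entry, quaternionOuterSquare] <;> ring

lemma IsSO3.exists_rotationMatrix_eq_of_inner_nonneg {x : Mat3} (hx : IsSO3 x) (u : ℍ[ℝ]) :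
    ∃ q : ℍ[ℝ], ‖q‖ = 1 ∧ 0 ≤ ⟪q, u⟫_ℝ ∧ rotationMatrix q = x := by
  obtain ⟨q, hq, rfl⟩ := hx.exists_rotationMatrix_eq
  rcases le_total 0 ⟪q, u⟫_ℝ with h | h
  · exact ⟨q, hq, h, rfl⟩
  · exact ⟨-q, by rwa [norm_neg], by simpa using h, rotationMatrix_neg q⟩

end UnitQuaternion

lemma card_le_of_so3Dist_le_so3Dist {ι : Type*} [Fintype ι] {x : Mat3} {y : ι → Mat3}
    (hx : IsSO3 x) (hy : ∀ i, IsSO3 (y i)) (hne : ∀ i, y i ≠ x)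
    (hsep : Pairwise fun i j ↦ so3Dist x (y i) ≤ so3Dist (y i) (y j)) : Fintype.card ι ≤ 24 := by
  obtain ⟨u, hu, rfl⟩ := hx.exists_rotationMatrix_eq
  choose v hv inner_nonneg hvy using fun i ↦ (hy i).exists_rotationMatrix_eq_of_inner_nonneg u
  obtain rfl : (fun i ↦ rotationMatrix (v i)) = y := funext hvy
  refine card_le_of_inner_le_inner Quaternion.finrank_eq_four hu hv inner_nonneg
    (fun i h ↦ hne i (congrArg rotationMatrix h)) fun i j hij ↦ ?_
  have abs_inner_le := (so3Dist_rotationMatrix_le_iff hu (hv i) (hv i) (hv j)).1 (hsep hij)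
  rw [real_inner_comm (v i) u, abs_of_nonneg (inner_nonneg i)] at abs_inner_le
  exact le_of_abs_le abs_inner_le

theorem packing_bound_on_SO3_general (r : ℝ) (C : Finset Mat3) (hC : ∀ p ∈ C, IsSO3 p)
    (hsep : ∀ p ∈ C, ∀ q ∈ C, p ≠ q → r ≤ so3Dist p q) (x : Mat3) (hx : IsSO3 x) :
    (C.filter fun p ↦ so3Dist x p ≤ r).card ≤ 25 := by
  let S := (C.filter fun p ↦ so3Dist x p ≤ r).erase x
  have mem_S (p : S) : p.1 ≠ x ∧ p.1 ∈ C ∧ so3Dist x p ≤ r := by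
    simpa only [S, Finset.mem_erase, Finset.mem_filter] using p.2
  have card_S_le : S.card ≤ 24 := by
    rw [← Fintype.card_coe]
    exact card_le_of_so3Dist_le_so3Dist hx (fun p : S ↦ hC p (mem_S p).2.1)
      (fun p ↦ (mem_S p).1) fun p q hpq ↦ (mem_S p).2.2.trans
        (hsep p (mem_S p).2.1 q (mem_S q).2.1 (Subtype.coe_ne_coe.2 hpq))
  exact Nat.le_add_of_sub_le (Finset.pred_card_le_card_erase.trans card_S_le)

theorem packing_bound_on_SO3
    (r : ℝ) (hr : 0 < r)
    (C : Finset Mat3) (hC : ∀ p ∈ C, IsSO3 p)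
    (hsep : ∀ p ∈ C, ∀ q ∈ C, p ≠ q → r ≤ so3Dist p q)
    (xj : Mat3) (hxj : xj ∈ C)
    (x : Mat3) (hx : IsSO3 x) :
    ((C.erase xj).filter (fun p => so3Dist x p ≤ r)).card ≤ 27 :=
  (Finset.card_le_card (Finset.filter_subset_filter _ (C.erase_subset xj))).trans
    ((packing_bound_on_SO3_general r C hC hsep x hx).trans (by norm_num))
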